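/- arXiv:1512.01294 — 2 statements merged into one kernel-verified Lean document; each statement's English description precedes it below -/
import Mathlib

section
/- Let L ∈ M_N(ℂ), H ∈ M_{r×n}(ℂ) and A ∈ M_n(ℂ). Then the unobservable subspace of the pair (L ⊗ H, I_N ⊗ A), namely { x ∈ ℂ^{Nn} : (L ⊗ H)(I_N ⊗ A)^m x = 0 for all integers m ≥ 0 }, equals the preimage under the linear map L ⊗ I_n of the N-fold Cartesian product O_H × ⋯ × O_H ⊆ ℂ^{Nn}, where O_H = { v ∈ ℂ^n : H A^m v = 0 for all m ≥ 0 } is the unobservable subspace of the pair (H, A). Equivalently, writing x = (x_1,…,x_N) with x_i ∈ ℂ^n, x is unobservable for (L ⊗ H, I_N ⊗ A) if and only if Σ_{j=1}^N l_{ij} x_j ∈ O_H for every i = 1,…,N. -/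
open Matrix
open scoped Kronecker

theorem kron_mulVec_aux {N p n : ℕ} (L : Matrix (Fin N) (Fin N) ℂ)
    (K : Matrix (Fin p) (Fin n) ℂ) (x : Fin N × Fin n → ℂ) (i : Fin N) (a : Fin p) :
    ((L ⊗ₖ K) *ᵥ x) (i, a) = (K *ᵥ fun b => ∑ j, L i j * x (j, b)) a := by
  simp only [Matrix.mulVec, dotProduct, Matrix.kroneckerMap_apply, Fintype.sum_prod_type,
    Finset.mul_sum]
  rw [Finset.sum_comm]
  refine Finset.sum_congr rfl fun b _ => Finset.sum_congr rfl fun j _ => ?_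
  ring

theorem one_kron_pow_aux {N n : ℕ} (A : Matrix (Fin n) (Fin n) ℂ) (m : ℕ) :
    ((1 : Matrix (Fin N) (Fin N) ℂ) ⊗ₖ A) ^ m = (1 : Matrix (Fin N) (Fin N) ℂ) ⊗ₖ (A ^ m) := by
  induction m with
  | zero => simp
  | succ k ih => rw [pow_succ, ih, ← Matrix.mul_kronecker_mul, one_mul, pow_succ]

theorem unobs_iff_aux {N r n : ℕ} (L : Matrix (Fin N) (Fin N) ℂ)
    (H : Matrix (Fin r) (Fin n) ℂ) (A : Matrix (Fin n) (Fin n) ℂ) (x : Fin N × Fin n → ℂ) :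
      (∀ m : ℕ,
        (L ⊗ₖ H) *ᵥ (((1 : Matrix (Fin N) (Fin N) ℂ) ⊗ₖ A) ^ m *ᵥ x) = 0) ↔
      (∀ i : Fin N, ∀ m : ℕ,
        H *ᵥ (A ^ m *ᵥ fun b => ∑ j, L i j * x (j, b)) = 0) := by
  have key : ∀ m i a, ((L ⊗ₖ H) *ᵥ (((1 : Matrix (Fin N) (Fin N) ℂ) ⊗ₖ A) ^ m *ᵥ x)) (i, a)
      = (H *ᵥ (A ^ m *ᵥ fun b => ∑ j, L i j * x (j, b))) a := by
    intro m i a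
    rw [one_kron_pow_aux, Matrix.mulVec_mulVec, ← Matrix.mul_kronecker_mul, mul_one,
      kron_mulVec_aux, Matrix.mulVec_mulVec]
  constructor
  · intro h i m
    funext a
    rw [← key, h m]; rfl
  · intro h m
    funext ⟨i, a⟩
    rw [key, h i m]; rfl

/-- the unobservable subspace of the pair `(L ⊗ H, I_N ⊗ A)`
consists exactly of those `x = (x_1, …, x_N)` such that `Σ_j l_{ij} x_j`
belongs to the unobservable subspace `O_H` of `(H, A)` for every `i`;
i.e. it is the preimage under `L ⊗ I_n` of `O_H × ⋯ × O_H`. -/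
theorem stmt3 {N r n : ℕ} (L : Matrix (Fin N) (Fin N) ℂ)
    (H : Matrix (Fin r) (Fin n) ℂ) (A : Matrix (Fin n) (Fin n) ℂ) :
    {x : Fin N × Fin n → ℂ | ∀ m : ℕ,
        (L ⊗ₖ H) *ᵥ (((1 : Matrix (Fin N) (Fin N) ℂ) ⊗ₖ A) ^ m *ᵥ x) = 0} =
      (fun x : Fin N × Fin n → ℂ =>
          (L ⊗ₖ (1 : Matrix (Fin n) (Fin n) ℂ)) *ᵥ x) ⁻¹'
        {y : Fin N × Fin n → ℂ | ∀ i : Fin N,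
          (fun b => y (i, b)) ∈ {v : Fin n → ℂ | ∀ m : ℕ, H *ᵥ (A ^ m *ᵥ v) = 0}} ∧
    ∀ x : Fin N × Fin n → ℂ,
      (∀ m : ℕ,
        (L ⊗ₖ H) *ᵥ (((1 : Matrix (Fin N) (Fin N) ℂ) ⊗ₖ A) ^ m *ᵥ x) = 0) ↔
      (∀ i : Fin N, ∀ m : ℕ,
        H *ᵥ (A ^ m *ᵥ fun b => ∑ j, L i j * x (j, b)) = 0) := by
  refine ⟨?_, unobs_iff_aux L H A⟩
  ext x
  simp only [Set.mem_setOf_eq, Set.mem_preimage, kron_mulVec_aux, Matrix.one_mulVec]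
  exact unobs_iff_aux L H A x
end

section
/- Assume the network data and LMI variables of the context, and suppose that for every i ∈ {1,…,N} and every k ∈ I both LMI (15) (γ²I − τ_i^k α_i² E_i^k ≻ 0 and γ²I − θ_ij^k β_ij² F_ij ≻ 0 for all j ∈ V_i^k) and the block LMI (16) hold. Define the gains K_ij^k = γ²(X_i^k)^{-1} H_ij' F_ij^{-1} and L_i^k = [ γ²(X_i^k)^{-1}(C_i^k)' + B₂(D_i^k)' ] (E_i^k)^{-1}, and set ε = min_{i,k} 2δ_i/(q_i^k + 1). Then for every k ∈ I, all vectors e_1,…,e_N ∈ ℝ^n, ξ ∈ ℝ^l, ξ_i ∈ ℝ^{l_i}, w_ij ∈ ℝ^{s_ij} (j ∈ V_i^k), and all vectors ω_i, ω_ij^{(1)}, ω_ij^{(2)} ∈ ℝ^n satisfying the norm bounds ‖ω_i‖² ≤ α_i² ‖C_i^k e_i + D_i^k ξ + D̄_i^k ξ_i‖², ‖ω_ij^{(1)}‖² ≤ β_ij² ‖H_ij e_i + G_ij w_ij‖², ‖ω_ij^{(2)}‖² ≤ β_ij² ‖H_ij e_j‖², the following dissipation inequality holds: N·Ψ^k(e)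 + Σ_{i=1}^N [ Σ_{l=1}^M λ_kl e_i' X_i^l e_i + 2 e_i' X_i^k f_i ] ≤ −ε Σ_{i=1}^N e_i' X_i^k e_i + γ² Σ_{i=1}^N ( ‖ξ‖² + ‖ξ_i‖² + Σ_{j∈V_i^k} ‖w_ij‖² ), where f_i = (A − L_i^k C_i^k) e_i + Σ_{j∈V_i^k} K_ij^k ( H_ij (e_j − e_i) − G_ij w_ij ) + (B₂ − L_i^k D_i^k) ξ − L_i^k D̄_i^k ξ_i − Σ_{j∈V_i^k} (ω_ij^{(1)} + ω_ij^{(2)}) − ω_i, and Ψ^k(e) = (1/N) Σ_{i=1}^N Σ_{j∈V_i^k} ‖e_j − e_i‖². -/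
open Matrix Finset

noncomputable section

/-- The data of the switching sensor network: plant matrices `A`, `B2`,
per-node and per-edge dimensions, neighbourhoods `V i k`, measurement
matrices `C`, `D`, `Dbar`, interconnection matrices `H`, `G`, and the
transition rate matrix `Lam` of the Markov chain on `Fin M`. -/
structure NetData (n N M l : ℕ) where
  A : Matrix (Fin n) (Fin n) ℝ
  B2 : Matrix (Fin n) (Fin l) ℝ
  r : Fin N → ℕ
  li : Fin N → ℕ
  rr : Fin N → Fin N → ℕ
  ss : Fin N → Fin N → ℕ
  V : Fin N → Fin M → Finset (Fin N)
  C : (i : Fin N) → Fin M → Matrix (Fin (r i)) (Fin n) ℝ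
  D : (i : Fin N) → Fin M → Matrix (Fin (r i)) (Fin l) ℝ
  Dbar : (i : Fin N) → Fin M → Matrix (Fin (r i)) (Fin (li i)) ℝ
  H : (i j : Fin N) → Matrix (Fin (rr i j)) (Fin n) ℝ
  G : (i j : Fin N) → Matrix (Fin (rr i j)) (Fin (ss i j)) ℝ
  Lam : Matrix (Fin M) (Fin M) ℝ

namespace NetData

variable {n N M l : ℕ} (nd : NetData n N M l)

/-- `E_i^k = D_i^k (D_i^k)' + D̄_i^k (D̄_i^k)'`. -/
def E (i : Fin N) (k : Fin M) : Matrix (Fin (nd.r i)) (Fin (nd.r i)) ℝ :=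
  nd.D i k * (nd.D i k)ᵀ + nd.Dbar i k * (nd.Dbar i k)ᵀ

/-- `F_ij = G_ij G_ij'`. -/
def F (i j : Fin N) : Matrix (Fin (nd.rr i j)) (Fin (nd.rr i j)) ℝ :=
  nd.G i j * (nd.G i j)ᵀ

/-- In-degree `p_i^k = |V_i^k|`. -/
def pdeg (i : Fin N) (k : Fin M) : ℕ := (nd.V i k).card

/-- Out-degree `q_i^k = |{j : i ∈ V_j^k}|`. -/
def qdeg (i : Fin N) (k : Fin M) : ℕ :=
  (Finset.univ.filter fun j => i ∈ nd.V j k).card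

variable (γ : ℝ) (δ : Fin N → ℝ) (β : Fin N → Fin N → ℝ)
  (τ : Fin N → Fin M → ℝ) (θ ϑ : Fin N → Fin N → Fin M → ℝ)
  (X : Fin N → Fin M → Matrix (Fin n) (Fin n) ℝ)

/-- The block `Q_i^k` of the LMI (16). -/
def Qblk (i : Fin N) (k : Fin M) : Matrix (Fin n) (Fin n) ℝ :=
  X i k * (nd.A + δ i • 1 - nd.B2 * (nd.D i k)ᵀ * (nd.E i k)⁻¹ * nd.C i k)
  + (nd.A + δ i • 1 - nd.B2 * (nd.D i k)ᵀ * (nd.E i k)⁻¹ * nd.C i k)ᵀ * X i k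
  + (((nd.pdeg i k : ℝ) + (nd.qdeg i k : ℝ))) • 1
  + ∑ j ∈ Finset.univ.filter (fun j => i ∈ nd.V j k),
      (ϑ j i k * (β j i) ^ 2) • ((nd.H j i)ᵀ * nd.H j i)
  + ∑ l', nd.Lam k l' • X i l'
  - γ ^ 2 • ((nd.C i k)ᵀ * (nd.E i k)⁻¹ * nd.C i k)
  - γ ^ 2 • ∑ j ∈ nd.V i k, (nd.H i j)ᵀ * (nd.F i j)⁻¹ * nd.H i j

/-- The block `N_i^k` of the LMI (16). -/
def Nblk (i : Fin N) (k : Fin M) : Matrix (Fin l) (Fin n) ℝ :=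
  (1 - (nd.D i k)ᵀ * (nd.E i k)⁻¹ * nd.D i k) * nd.B2ᵀ * X i k

/-- The block `S_i^k` of the LMI (16). -/
def Sblk (i : Fin N) (k : Fin M) : Matrix (Fin (nd.li i)) (Fin n) ℝ :=
  -((nd.Dbar i k)ᵀ * (nd.E i k)⁻¹ * nd.D i k * nd.B2ᵀ * X i k)

/-- Index type for the rows/columns of the fourth block row of the LMI (16):
one copy of `Fin n` for the `τ`-block and one copy for each `θ`- and
`ϑ`-block (`j ∈ V_i^k`). -/
abbrev tIdx (i : Fin N) (k : Fin M) : Type :=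
  Unit ⊕ ({j // j ∈ nd.V i k} ⊕ {j // j ∈ nd.V i k})

/-- The diagonal scalars of the block `T_i^k`. -/
def tCoef (i : Fin N) (k : Fin M) : nd.tIdx i k → ℝ
  | .inl _ => τ i k
  | .inr (.inl j) => θ i j.1 k
  | .inr (.inr j) => ϑ i j.1 k

/-- Entry of the block `Ξ_i^k` (horizontal concatenation of the blocks
`γ² H_ij' F_ij⁻¹ H_ij − I`, `j ∈ V_i^k`). -/
def xiBlk (i : Fin N) (k : Fin M)
    (x : Fin n) (jc : {j // j ∈ nd.V i k} × Fin n) : ℝ :=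
  (γ ^ 2 • ((nd.H i jc.1.1)ᵀ * (nd.F i jc.1.1)⁻¹ * nd.H i jc.1.1)
    - (1 : Matrix (Fin n) (Fin n) ℝ)) x jc.2

/-- Index type for the rows/columns of the block matrix in the LMI (16). -/
abbrev idx (i : Fin N) (k : Fin M) : Type :=
  Fin n ⊕ (Fin l ⊕ (Fin (nd.li i) ⊕
    ((nd.tIdx i k × Fin n) ⊕ ({j // j ∈ nd.V i k} × Fin n))))

/-- The symmetric block matrix of the LMI (16), with block rows
`[Q, ⋆, ⋆, ⋆, ⋆]`, `[N, −γ²I, ⋆, ⋆, ⋆]`, `[S, 0, −γ²I, ⋆, ⋆]`,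
`[1 ⊗ X, 0, 0, −T, ⋆]`, `[Ξ', 0, 0, 0, −Z]`. -/
def bigMat (i : Fin N) (k : Fin M) :
    Matrix (nd.idx i k) (nd.idx i k) ℝ :=
  Matrix.of fun a b =>
    match a, b with
    -- block row 1
    | .inl x, .inl y => nd.Qblk γ δ β ϑ X i k x y
    | .inl x, .inr (.inl y) => (nd.Nblk X i k)ᵀ x y
    | .inl x, .inr (.inr (.inl y)) => (nd.Sblk X i k)ᵀ x y
    | .inl x, .inr (.inr (.inr (.inl wc))) => X i k wc.2 x
    | .inl x, .inr (.inr (.inr (.inr jc))) => nd.xiBlk γ i k x jc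
    -- block row 2
    | .inr (.inl x), .inl y => nd.Nblk X i k x y
    | .inr (.inl x), .inr (.inl y) => if x = y then -(γ ^ 2) else 0
    | .inr (.inl _), .inr (.inr _) => 0
    -- block row 3
    | .inr (.inr (.inl x)), .inl y => nd.Sblk X i k x y
    | .inr (.inr (.inl _)), .inr (.inl _) => 0
    | .inr (.inr (.inl x)), .inr (.inr (.inl y)) => if x = y then -(γ ^ 2) else 0
    | .inr (.inr (.inl _)), .inr (.inr (.inr _)) => 0
    -- block row 4 : [1_{1+2p} ⊗ X, 0, 0, −T, 0]
    | .inr (.inr (.inr (.inl wc))), .inl y => X i k wc.2 y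
    | .inr (.inr (.inr (.inl _))), .inr (.inl _) => 0
    | .inr (.inr (.inr (.inl _))), .inr (.inr (.inl _)) => 0
    | .inr (.inr (.inr (.inl wc))), .inr (.inr (.inr (.inl wc'))) =>
        if wc = wc' then -(nd.tCoef τ θ ϑ i k wc.1) else 0
    | .inr (.inr (.inr (.inl _))), .inr (.inr (.inr (.inr _))) => 0
    -- block row 5 : [Ξ', 0, 0, 0, −Z]
    | .inr (.inr (.inr (.inr jc))), .inl y => nd.xiBlk γ i k y jc
    | .inr (.inr (.inr (.inr _))), .inr (.inl _) => 0
    | .inr (.inr (.inr (.inr _))), .inr (.inr (.inl _)) => 0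
    | .inr (.inr (.inr (.inr _))), .inr (.inr (.inr (.inl _))) => 0
    | .inr (.inr (.inr (.inr jc))), .inr (.inr (.inr (.inr jc'))) =>
        if jc.1 = jc'.1 then
          -((2 * δ jc.1.1 / ((nd.qdeg jc.1.1 k : ℝ) + 1)) * X jc.1.1 k jc.2 jc'.2)
        else 0

/-- The interconnection gain `K_ij^k = γ² (X_i^k)⁻¹ H_ij' F_ij⁻¹`. -/
def Kgain (i j : Fin N) (k : Fin M) : Matrix (Fin n) (Fin (nd.rr i j)) ℝ :=
  γ ^ 2 • ((X i k)⁻¹ * (nd.H i j)ᵀ * (nd.F i j)⁻¹)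

/-- The innovation gain `L_i^k = [γ² (X_i^k)⁻¹ (C_i^k)' + B₂ (D_i^k)'] (E_i^k)⁻¹`. -/
def Lgain (i : Fin N) (k : Fin M) : Matrix (Fin n) (Fin (nd.r i)) ℝ :=
  (γ ^ 2 • ((X i k)⁻¹ * (nd.C i k)ᵀ) + nd.B2 * (nd.D i k)ᵀ) * (nd.E i k)⁻¹

/-- The error drift `f_i` of the perturbed auxiliary observer network. -/
def drift (k : Fin M) (e : Fin N → Fin n → ℝ) (ξ : Fin l → ℝ)
    (ξl : (i : Fin N) → Fin (nd.li i) → ℝ)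
    (w : (i j : Fin N) → Fin (nd.ss i j) → ℝ)
    (ω : Fin N → Fin n → ℝ) (ω1 ω2 : Fin N → Fin N → Fin n → ℝ)
    (i : Fin N) : Fin n → ℝ :=
  (nd.A - nd.Lgain γ X i k * nd.C i k) *ᵥ e i
  + ∑ j ∈ nd.V i k,
      nd.Kgain γ X i j k *ᵥ (nd.H i j *ᵥ (e j - e i) - nd.G i j *ᵥ w i j)
  + (nd.B2 - nd.Lgain γ X i k * nd.D i k) *ᵥ ξ
  - (nd.Lgain γ X i k * nd.Dbar i k) *ᵥ ξl i
  - (∑ j ∈ nd.V i k, (ω1 i j + ω2 i j) + ω i)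

/-- The disagreement function `Ψ^k(e) = (1/N) Σ_i Σ_{j ∈ V_i^k} ‖e_j − e_i‖²`. -/
def disagree (k : Fin M) (e : Fin N → Fin n → ℝ) : ℝ :=
  (1 / (N : ℝ)) * ∑ i, ∑ j ∈ nd.V i k, (e j - e i) ⬝ᵥ (e j - e i)

end NetData

/-- transpose moves across the dot product -/
theorem aux_dot_tr {m n : ℕ} (A : Matrix (Fin m) (Fin n) ℝ) (x : Fin n → ℝ) (y : Fin m → ℝ) :
    x ⬝ᵥ (Aᵀ *ᵥ y) = (A *ᵥ x) ⬝ᵥ y := by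
  rw [Matrix.mulVec_transpose, dotProduct_comm, ← Matrix.dotProduct_mulVec, dotProduct_comm]

theorem aux_symm {n : ℕ} {X : Matrix (Fin n) (Fin n) ℝ} (hX : Xᵀ = X) (x y : Fin n → ℝ) :
    x ⬝ᵥ (X *ᵥ y) = (X *ᵥ x) ⬝ᵥ y := by
  conv_lhs => rw [← hX]
  exact aux_dot_tr X x y

theorem aux_pd_tr {n : ℕ} {X : Matrix (Fin n) (Fin n) ℝ} (hX : X.PosDef) : Xᵀ = X := by
  have := hX.isHermitian
  rwa [Matrix.IsHermitian, Matrix.conjTranspose_eq_transpose_of_trivial] at this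

theorem aux_inv_tr {n : ℕ} {X : Matrix (Fin n) (Fin n) ℝ} (hX : X.PosDef) : (X⁻¹)ᵀ = X⁻¹ :=
  aux_pd_tr hX.inv

theorem aux_nonneg {ι : Type*} [Fintype ι] {X : Matrix ι ι ℝ} (hX : X.PosDef) (x : ι → ℝ) :
    0 ≤ x ⬝ᵥ (X *ᵥ x) := by
  have := hX.posSemidef.dotProduct_mulVec_nonneg x
  simpa using this

theorem aux_mul_inv {n : ℕ} {X : Matrix (Fin n) (Fin n) ℝ} (hX : X.PosDef) (y : Fin n → ℝ) :
    X *ᵥ (X⁻¹ *ᵥ y) = y := by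
  rw [Matrix.mulVec_mulVec, Matrix.mul_nonsing_inv _ ((Matrix.isUnit_iff_isUnit_det _).1 hX.isUnit),
    Matrix.one_mulVec]

theorem aux_A {n : ℕ} {E : Matrix (Fin n) (Fin n) ℝ} (hE : E.PosDef) (g c : ℝ) (hg : 0 < g)
    (hc : 0 ≤ c) (h : (g • (1 : Matrix (Fin n) (Fin n) ℝ) - c • E).PosDef) (y : Fin n → ℝ) :
    c * (y ⬝ᵥ y) ≤ g * (y ⬝ᵥ (E⁻¹ *ᵥ y)) := by
  set u := E⁻¹ *ᵥ y with hu
  have hy : E *ᵥ u = y := aux_mul_inv hE y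
  have h1 := aux_nonneg h y
  have h2 := aux_nonneg hE (g • u - c • y)
  have hs := aux_symm (aux_pd_tr hE) u y
  have hs' : y ⬝ᵥ u = u ⬝ᵥ y := dotProduct_comm _ _
  simp only [Matrix.sub_mulVec, Matrix.smul_mulVec, Matrix.one_mulVec, Matrix.mulVec_sub,
    Matrix.mulVec_smul, dotProduct_sub, sub_dotProduct, smul_dotProduct, dotProduct_smul,
    smul_eq_mul, hy] at h1 h2 hs ⊢
  rw [hs] at h2
  rw [hs'] at *
  have h3 := mul_nonneg hc h1
  have : 0 ≤ g * (g * (u ⬝ᵥ y) - c * (y ⬝ᵥ y)) := by nlinarith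
  have := nonneg_of_mul_nonneg_right this hg
  linarith

theorem aux_C {m s : ℕ} (G : Matrix (Fin m) (Fin s) ℝ) (hF : (G * Gᵀ).PosDef) (w : Fin s → ℝ) :
    (G *ᵥ w) ⬝ᵥ ((G * Gᵀ)⁻¹ *ᵥ (G *ᵥ w)) ≤ w ⬝ᵥ w := by
  set a := (G * Gᵀ)⁻¹ *ᵥ (G *ᵥ w) with ha
  have hy : (G * Gᵀ) *ᵥ a = G *ᵥ w := aux_mul_inv hF _
  rw [← Matrix.mulVec_mulVec] at hy
  have h0 : 0 ≤ (w - Gᵀ *ᵥ a) ⬝ᵥ (w - Gᵀ *ᵥ a) := by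
    simpa using dotProduct_star_self_nonneg (w - Gᵀ *ᵥ a)
  have h1 := aux_dot_tr G w a
  have h2 := aux_dot_tr G (Gᵀ *ᵥ a) a
  rw [hy] at h2
  have h3 := dotProduct_comm (Gᵀ *ᵥ a) w
  simp only [dotProduct_sub, sub_dotProduct] at h0
  linarith

theorem aux_B {m s t : ℕ} (D : Matrix (Fin m) (Fin s) ℝ) (D' : Matrix (Fin m) (Fin t) ℝ)
    (E : Matrix (Fin m) (Fin m) ℝ) (hED : E = D * Dᵀ + D' * D'ᵀ)
    (hE : E.PosDef) (x : Fin s → ℝ) (x' : Fin t → ℝ) (b : Fin s → ℝ) :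
    ∃ (y : Fin s → ℝ) (y' : Fin t → ℝ),
      y ⬝ᵥ y + y' ⬝ᵥ y' = x ⬝ᵥ x + x' ⬝ᵥ x'
        - (D *ᵥ x + D' *ᵥ x') ⬝ᵥ (E⁻¹ *ᵥ (D *ᵥ x + D' *ᵥ x')) ∧
      (b - Dᵀ *ᵥ (E⁻¹ *ᵥ (D *ᵥ b))) ⬝ᵥ y - (D'ᵀ *ᵥ (E⁻¹ *ᵥ (D *ᵥ b))) ⬝ᵥ y'
        = b ⬝ᵥ x - (D *ᵥ b) ⬝ᵥ (E⁻¹ *ᵥ (D *ᵥ x + D' *ᵥ x')) := by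
  set v := D *ᵥ x + D' *ᵥ x' with hv
  set a := E⁻¹ *ᵥ v with ha
  have hy : E *ᵥ a = v := aux_mul_inv hE _
  have hy2 : D *ᵥ (Dᵀ *ᵥ a) + D' *ᵥ (D'ᵀ *ᵥ a) = v := by
    clear_value a
    rw [Matrix.mulVec_mulVec, Matrix.mulVec_mulVec, ← Matrix.add_mulVec, ← hED, hy]
  have hav : (D *ᵥ (Dᵀ *ᵥ a)) ⬝ᵥ a + (D' *ᵥ (D'ᵀ *ᵥ a)) ⬝ᵥ a = v ⬝ᵥ a := by
    rw [← hy2, add_dotProduct]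
  have hav2 : (D *ᵥ x) ⬝ᵥ a + (D' *ᵥ x') ⬝ᵥ a = v ⬝ᵥ a := by
    rw [hv, add_dotProduct]
  refine ⟨x - Dᵀ *ᵥ a, x' - D'ᵀ *ᵥ a, ?_, ?_⟩
  · have h1 := aux_dot_tr D x a
    have h2 := aux_dot_tr D (Dᵀ *ᵥ a) a
    have h3 := aux_dot_tr D' x' a
    have h4 := aux_dot_tr D' (D'ᵀ *ᵥ a) a
    have h5 := dotProduct_comm (Dᵀ *ᵥ a) x
    have h6 := dotProduct_comm (D'ᵀ *ᵥ a) x'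
    simp only [dotProduct_sub, sub_dotProduct]
    linarith
  · set c := E⁻¹ *ᵥ (D *ᵥ b) with hc
    have key : ((D *ᵥ x) ⬝ᵥ c + (D' *ᵥ x') ⬝ᵥ c)
        = (D *ᵥ (Dᵀ *ᵥ a)) ⬝ᵥ c + (D' *ᵥ (D'ᵀ *ᵥ a)) ⬝ᵥ c := by
      rw [← add_dotProduct, ← add_dotProduct, hy2]
    have h1 := aux_dot_tr D x c
    have h2 := aux_dot_tr D (Dᵀ *ᵥ a) c
    have h3 := aux_dot_tr D' x' c
    have h4 := aux_dot_tr D' (D'ᵀ *ᵥ a) c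
    have h5 := aux_dot_tr D b a
    simp only [dotProduct_sub, sub_dotProduct]
    rw [dotProduct_comm (Dᵀ *ᵥ c), dotProduct_comm (Dᵀ *ᵥ c), dotProduct_comm (D'ᵀ *ᵥ c),
      dotProduct_comm (D'ᵀ *ᵥ c)]
    linarith

namespace NetData

variable {n N M l : ℕ} (nd : NetData n N M l) (γ : ℝ) (δ : Fin N → ℝ) (β : Fin N → Fin N → ℝ)
  (τ : Fin N → Fin M → ℝ) (θ ϑ : Fin N → Fin N → Fin M → ℝ)
  (X : Fin N → Fin M → Matrix (Fin n) (Fin n) ℝ)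

theorem aux_Q (i : Fin N) (k : Fin M) (hX : (X i k)ᵀ = X i k)
    (e : Fin n → ℝ) :
    e ⬝ᵥ (nd.Qblk γ δ β ϑ X i k *ᵥ e) =
      2 * ((X i k *ᵥ e) ⬝ᵥ (nd.A *ᵥ e)) + 2 * δ i * (e ⬝ᵥ (X i k *ᵥ e))
      - 2 * ((nd.D i k *ᵥ (nd.B2ᵀ *ᵥ (X i k *ᵥ e))) ⬝ᵥ ((nd.E i k)⁻¹ *ᵥ (nd.C i k *ᵥ e)))
      + ((nd.pdeg i k : ℝ) + (nd.qdeg i k : ℝ)) * (e ⬝ᵥ e)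
      + ∑ j ∈ Finset.univ.filter (fun j => i ∈ nd.V j k),
          (ϑ j i k * (β j i) ^ 2) * ((nd.H j i *ᵥ e) ⬝ᵥ (nd.H j i *ᵥ e))
      + ∑ l', nd.Lam k l' * (e ⬝ᵥ (X i l' *ᵥ e))
      - γ ^ 2 * ((nd.C i k *ᵥ e) ⬝ᵥ ((nd.E i k)⁻¹ *ᵥ (nd.C i k *ᵥ e)))
      - γ ^ 2 * ∑ j ∈ nd.V i k, (nd.H i j *ᵥ e) ⬝ᵥ ((nd.F i j)⁻¹ *ᵥ (nd.H i j *ᵥ e)) := by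
  have hs : ∀ y, e ⬝ᵥ (X i k *ᵥ y) = (X i k *ᵥ e) ⬝ᵥ y := aux_symm hX e
  set P := nd.A + δ i • 1 - nd.B2 * (nd.D i k)ᵀ * (nd.E i k)⁻¹ * nd.C i k with hP
  have hPe : (X i k *ᵥ e) ⬝ᵥ (P *ᵥ e) = (X i k *ᵥ e) ⬝ᵥ (nd.A *ᵥ e)
      + δ i * (e ⬝ᵥ (X i k *ᵥ e))
      - ((nd.D i k *ᵥ (nd.B2ᵀ *ᵥ (X i k *ᵥ e))) ⬝ᵥ ((nd.E i k)⁻¹ *ᵥ (nd.C i k *ᵥ e))) := by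
    rw [hP]
    simp only [Matrix.sub_mulVec, Matrix.add_mulVec, Matrix.smul_mulVec, Matrix.one_mulVec,
      dotProduct_sub, dotProduct_add, dotProduct_smul, smul_eq_mul, ← Matrix.mulVec_mulVec]
    rw [← aux_dot_tr (nd.D i k), ← aux_dot_tr nd.B2ᵀ, Matrix.transpose_transpose, hs e]
  simp only [Qblk, ← hP]
  simp only [Matrix.sub_mulVec, Matrix.add_mulVec, Matrix.smul_mulVec, Matrix.one_mulVec,
      dotProduct_sub, dotProduct_add, dotProduct_smul, smul_eq_mul, ← Matrix.mulVec_mulVec,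
      Matrix.sum_mulVec, dotProduct_sum, aux_dot_tr]
  rw [hs (P *ᵥ e), dotProduct_comm (P *ᵥ e), hPe]
  ring

theorem aux_big (i : Fin N) (k : Fin M) (hX : (X i k)ᵀ = X i k) (e : Fin n → ℝ)
    (y : Fin l → ℝ) (y' : Fin (nd.li i) → ℝ) (o : Fin n → ℝ) (o1 o2 z : Fin N → Fin n → ℝ)
    (h : (-(nd.bigMat γ δ β τ θ ϑ X i k)).PosDef) :
    e ⬝ᵥ (nd.Qblk γ δ β ϑ X i k *ᵥ e) + 2 * ((nd.Nblk X i k *ᵥ e) ⬝ᵥ y)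
      + 2 * ((nd.Sblk X i k *ᵥ e) ⬝ᵥ y') - γ ^ 2 * (y ⬝ᵥ y) - γ ^ 2 * (y' ⬝ᵥ y')
      + 2 * ((X i k *ᵥ e) ⬝ᵥ o) - τ i k * (o ⬝ᵥ o)
      + ∑ j ∈ nd.V i k, (2 * ((X i k *ᵥ e) ⬝ᵥ o1 j) - θ i j k * (o1 j ⬝ᵥ o1 j)
        + (2 * ((X i k *ᵥ e) ⬝ᵥ o2 j) - ϑ i j k * (o2 j ⬝ᵥ o2 j))
        + (2 * (γ ^ 2 * ((nd.H i j *ᵥ e) ⬝ᵥ ((nd.F i j)⁻¹ *ᵥ (nd.H i j *ᵥ z j))) - e ⬝ᵥ z j)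
        - 2 * δ j / ((nd.qdeg j k : ℝ) + 1) * (z j ⬝ᵥ (X j k *ᵥ z j)))) ≤ 0 := by
  have hx : ∀ x y, X i k x y = X i k y x := fun x y => by
    conv_lhs => rw [← hX]
    rfl
  let ot : nd.tIdx i k → Fin n → ℝ :=
    Sum.elim (fun _ => o) (Sum.elim (fun j => o1 j.1) (fun j => o2 j.1))
  let v : nd.idx i k → ℝ := Sum.elim e (Sum.elim y (Sum.elim y' (Sum.elim
    (fun wc => ot wc.1 wc.2) (fun jc => z jc.1.1 jc.2))))
  let W : Fin N → Matrix (Fin n) (Fin n) ℝ := fun j =>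
    γ ^ 2 • ((nd.H i j)ᵀ * (nd.F i j)⁻¹ * nd.H i j) - (1 : Matrix (Fin n) (Fin n) ℝ)
  have h0 := aux_nonneg h v
  rw [Matrix.neg_mulVec, dotProduct_neg] at h0
  have h1 : v ⬝ᵥ (nd.bigMat γ δ β τ θ ϑ X i k *ᵥ v) ≤ 0 := by linarith
  refine le_of_eq_of_le ?_ h1
  have r1 : ∀ x, (nd.bigMat γ δ β τ θ ϑ X i k *ᵥ v) (.inl x) =
      (nd.Qblk γ δ β ϑ X i k *ᵥ e) x + (((nd.Nblk X i k)ᵀ *ᵥ y) x + (((nd.Sblk X i k)ᵀ *ᵥ y') x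
      + (∑ t, (X i k *ᵥ ot t) x + ∑ j : {j // j ∈ nd.V i k}, (W j.1 *ᵥ z j.1) x))) := by
    intro x
    simp only [Matrix.mulVec, dotProduct, Fintype.sum_sum_type, Fintype.sum_prod_type, bigMat,
      Matrix.of_apply, v, Sum.elim_inl, Sum.elim_inr, xiBlk, W, hx _ x]
  have r2 : ∀ x, (nd.bigMat γ δ β τ θ ϑ X i k *ᵥ v) (.inr (.inl x)) =
      (nd.Nblk X i k *ᵥ e) x - γ ^ 2 * y x := by
    intro x
    rw [Matrix.mulVec, dotProduct, Fintype.sum_sum_type, Fintype.sum_sum_type]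
    simp [Matrix.mulVec, dotProduct, bigMat, v, sub_eq_add_neg]
  have r3 : ∀ x, (nd.bigMat γ δ β τ θ ϑ X i k *ᵥ v) (.inr (.inr (.inl x))) =
      (nd.Sblk X i k *ᵥ e) x - γ ^ 2 * y' x := by
    intro x
    rw [Matrix.mulVec, dotProduct, Fintype.sum_sum_type, Fintype.sum_sum_type,
      Fintype.sum_sum_type]
    simp [Matrix.mulVec, dotProduct, bigMat, v, sub_eq_add_neg]
  have r4 : ∀ wc, (nd.bigMat γ δ β τ θ ϑ X i k *ᵥ v) (.inr (.inr (.inr (.inl wc)))) =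
      (X i k *ᵥ e) wc.2 - nd.tCoef τ θ ϑ i k wc.1 * ot wc.1 wc.2 := by
    intro wc
    rw [Matrix.mulVec, dotProduct, Fintype.sum_sum_type, Fintype.sum_sum_type,
      Fintype.sum_sum_type, Fintype.sum_sum_type]
    simp only [Matrix.mulVec, dotProduct, bigMat, v, sub_eq_add_neg, Matrix.of_apply,
      Sum.elim_inl, Sum.elim_inr, zero_mul, Finset.sum_const_zero, ite_mul,
      Finset.sum_ite_eq, Finset.mem_univ, if_true]
    ring
  have r5 : ∀ jc, (nd.bigMat γ δ β τ θ ϑ X i k *ᵥ v) (.inr (.inr (.inr (.inr jc)))) =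
      ((W jc.1.1)ᵀ *ᵥ e) jc.2
        - 2 * δ jc.1.1 / ((nd.qdeg jc.1.1 k : ℝ) + 1) * (X jc.1.1 k *ᵥ z jc.1.1) jc.2 := by
    intro jc
    rw [Matrix.mulVec, dotProduct, Fintype.sum_sum_type, Fintype.sum_sum_type,
      Fintype.sum_sum_type, Fintype.sum_sum_type, Fintype.sum_prod_type (f := fun q :
        {j // j ∈ nd.V i k} × Fin n => nd.bigMat γ δ β τ θ ϑ X i k _ (.inr (.inr (.inr (.inr q)))) *
          v (.inr (.inr (.inr (.inr q)))))]
    rw [Finset.sum_eq_single_of_mem jc.1 (Finset.mem_univ _) (by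
      intro b _ hb
      apply Finset.sum_eq_zero
      intro c _
      simp [bigMat, hb.symm])]
    simp [Matrix.mulVec, dotProduct, bigMat, v, sub_eq_add_neg, xiBlk, W, Finset.mul_sum, mul_assoc]
  have hWz : ∀ j, e ⬝ᵥ (W j *ᵥ z j) =
      γ ^ 2 * ((nd.H i j *ᵥ e) ⬝ᵥ ((nd.F i j)⁻¹ *ᵥ (nd.H i j *ᵥ z j))) - e ⬝ᵥ z j := by
    intro j
    simp only [W, Matrix.sub_mulVec, Matrix.smul_mulVec, Matrix.one_mulVec,
      dotProduct_sub, dotProduct_smul, smul_eq_mul, ← Matrix.mulVec_mulVec, aux_dot_tr]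
  have tot : v ⬝ᵥ (nd.bigMat γ δ β τ θ ϑ X i k *ᵥ v) =
      (e ⬝ᵥ (nd.Qblk γ δ β ϑ X i k *ᵥ e) + (e ⬝ᵥ ((nd.Nblk X i k)ᵀ *ᵥ y)
        + (e ⬝ᵥ ((nd.Sblk X i k)ᵀ *ᵥ y') + (∑ t, e ⬝ᵥ (X i k *ᵥ ot t)
          + ∑ j : {j // j ∈ nd.V i k}, e ⬝ᵥ (W j.1 *ᵥ z j.1)))))
      + ((y ⬝ᵥ (nd.Nblk X i k *ᵥ e) - γ ^ 2 * (y ⬝ᵥ y))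
      + ((y' ⬝ᵥ (nd.Sblk X i k *ᵥ e) - γ ^ 2 * (y' ⬝ᵥ y'))
      + (∑ t, (ot t ⬝ᵥ (X i k *ᵥ e) - nd.tCoef τ θ ϑ i k t * (ot t ⬝ᵥ ot t))
      + ∑ j : {j // j ∈ nd.V i k}, (z j.1 ⬝ᵥ ((W j.1)ᵀ *ᵥ e)
        - 2 * δ j.1 / ((nd.qdeg j.1 k : ℝ) + 1) * (z j.1 ⬝ᵥ (X j.1 k *ᵥ z j.1)))))) := by
    rw [dotProduct, Fintype.sum_sum_type, Fintype.sum_sum_type,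
      Fintype.sum_sum_type, Fintype.sum_sum_type]
    simp only [r1, r2, r3, r4, r5]
    congr 1
    · simp only [← dotProduct_sum, ← dotProduct_add]
      simp [dotProduct, v]
    congr 1
    · simp only [dotProduct, v, Finset.mul_sum, ← Finset.sum_sub_distrib, Sum.elim_inl,
        Sum.elim_inr]
      exact Finset.sum_congr rfl fun x _ => by ring
    congr 1
    · simp only [dotProduct, v, Finset.mul_sum, ← Finset.sum_sub_distrib, Sum.elim_inl,
        Sum.elim_inr]
      exact Finset.sum_congr rfl fun x _ => by ring
    congr 1
    · rw [Fintype.sum_prod_type]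
      refine Finset.sum_congr rfl fun t _ => ?_
      simp only [dotProduct, v, Finset.mul_sum, ← Finset.sum_sub_distrib, Sum.elim_inl,
        Sum.elim_inr]
      exact Finset.sum_congr rfl fun x _ => by ring
    · rw [Fintype.sum_prod_type]
      refine Finset.sum_congr rfl fun t _ => ?_
      simp only [dotProduct, v, Finset.mul_sum, ← Finset.sum_sub_distrib, Sum.elim_inl,
        Sum.elim_inr]
      exact Finset.sum_congr rfl fun x _ => by ring
  rw [tot]
  have hs : ∀ y, e ⬝ᵥ (X i k *ᵥ y) = (X i k *ᵥ e) ⬝ᵥ y := aux_symm hX e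
  have c1 : ∀ j, z j ⬝ᵥ ((W j)ᵀ *ᵥ e) = e ⬝ᵥ (W j *ᵥ z j) := fun j => by
    rw [aux_dot_tr, dotProduct_comm]
  simp only [c1, hWz, Fintype.sum_sum_type, tCoef, ot, Sum.elim_inl, Sum.elim_inr,
    Finset.univ_unique, Finset.sum_singleton]
  rw [← Finset.sum_coe_sort (nd.V i k)]
  simp only [aux_dot_tr, dotProduct_comm y (nd.Nblk X i k *ᵥ e),
    dotProduct_comm y' (nd.Sblk X i k *ᵥ e), dotProduct_comm _ (X i k *ᵥ e), hs,
    Finset.sum_add_distrib, Finset.sum_sub_distrib, mul_sub, ← Finset.mul_sum]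
  ring

end NetData

namespace NetData

variable {n N M l : ℕ} (nd : NetData n N M l) (γ : ℝ) (δ : Fin N → ℝ) (β : Fin N → Fin N → ℝ)
  (τ : Fin N → Fin M → ℝ) (θ ϑ : Fin N → Fin N → Fin M → ℝ)
  (X : Fin N → Fin M → Matrix (Fin n) (Fin n) ℝ)

theorem aux_L (i : Fin N) (k : Fin M) (hX : (X i k).PosDef) (e : Fin n → ℝ)
    (u : Fin (nd.r i) → ℝ) :
    (X i k *ᵥ e) ⬝ᵥ (nd.Lgain γ X i k *ᵥ u) =
      γ ^ 2 * ((nd.C i k *ᵥ e) ⬝ᵥ ((nd.E i k)⁻¹ *ᵥ u))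
      + (nd.D i k *ᵥ (nd.B2ᵀ *ᵥ (X i k *ᵥ e))) ⬝ᵥ ((nd.E i k)⁻¹ *ᵥ u) := by
  have hs := aux_symm (aux_pd_tr hX) e
  simp only [Lgain, ← Matrix.mulVec_mulVec, Matrix.add_mulVec, Matrix.smul_mulVec,
    dotProduct_add, dotProduct_smul, smul_eq_mul]
  rw [← hs, aux_mul_inv hX, aux_dot_tr, ← aux_dot_tr (nd.D i k), ← aux_dot_tr nd.B2ᵀ,
    Matrix.transpose_transpose]

theorem aux_K (i j : Fin N) (k : Fin M) (hX : (X i k).PosDef) (e : Fin n → ℝ)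
    (u : Fin (nd.rr i j) → ℝ) :
    (X i k *ᵥ e) ⬝ᵥ (nd.Kgain γ X i j k *ᵥ u) =
      γ ^ 2 * ((nd.H i j *ᵥ e) ⬝ᵥ ((nd.F i j)⁻¹ *ᵥ u)) := by
  have hs := aux_symm (aux_pd_tr hX) e
  simp only [Kgain, ← Matrix.mulVec_mulVec, Matrix.smul_mulVec, dotProduct_smul, smul_eq_mul]
  rw [← hs, aux_mul_inv hX, aux_dot_tr]

theorem aux_drift (i : Fin N) (k : Fin M) (hX : (X i k).PosDef)
    (e : Fin N → Fin n → ℝ) (ξ : Fin l → ℝ)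
    (ξl : (i : Fin N) → Fin (nd.li i) → ℝ)
    (w : (i j : Fin N) → Fin (nd.ss i j) → ℝ)
    (ω : Fin N → Fin n → ℝ) (ω1 ω2 : Fin N → Fin N → Fin n → ℝ) :
    e i ⬝ᵥ (X i k *ᵥ nd.drift γ X k e ξ ξl w ω ω1 ω2 i) =
      (X i k *ᵥ e i) ⬝ᵥ (nd.A *ᵥ e i)
      - γ ^ 2 * ((nd.C i k *ᵥ e i) ⬝ᵥ ((nd.E i k)⁻¹ *ᵥ
          (nd.C i k *ᵥ e i + nd.D i k *ᵥ ξ + nd.Dbar i k *ᵥ ξl i)))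
      - (nd.D i k *ᵥ (nd.B2ᵀ *ᵥ (X i k *ᵥ e i))) ⬝ᵥ ((nd.E i k)⁻¹ *ᵥ (nd.C i k *ᵥ e i))
      - (nd.D i k *ᵥ (nd.B2ᵀ *ᵥ (X i k *ᵥ e i))) ⬝ᵥ ((nd.E i k)⁻¹ *ᵥ
          (nd.D i k *ᵥ ξ + nd.Dbar i k *ᵥ ξl i))
      + (nd.B2ᵀ *ᵥ (X i k *ᵥ e i)) ⬝ᵥ ξ
      - (X i k *ᵥ e i) ⬝ᵥ ω i
      + ∑ j ∈ nd.V i k,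
        (γ ^ 2 * ((nd.H i j *ᵥ e i) ⬝ᵥ ((nd.F i j)⁻¹ *ᵥ (nd.H i j *ᵥ e j)))
        - γ ^ 2 * ((nd.H i j *ᵥ e i) ⬝ᵥ ((nd.F i j)⁻¹ *ᵥ (nd.H i j *ᵥ e i + nd.G i j *ᵥ w i j)))
        - (X i k *ᵥ e i) ⬝ᵥ ω1 i j - (X i k *ᵥ e i) ⬝ᵥ ω2 i j) := by
  rw [aux_symm (aux_pd_tr hX)]
  have hB : (X i k *ᵥ e i) ⬝ᵥ (nd.B2 *ᵥ ξ) = (nd.B2ᵀ *ᵥ (X i k *ᵥ e i)) ⬝ᵥ ξ := by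
    rw [← aux_dot_tr nd.B2ᵀ, Matrix.transpose_transpose]
  simp only [drift, Matrix.sub_mulVec, dotProduct_add, dotProduct_sub, dotProduct_sum,
    ← Matrix.mulVec_mulVec, nd.aux_L γ X i k hX, nd.aux_K γ X i _ k hX, hB, Matrix.mulVec_add,
    Matrix.mulVec_sub, Finset.sum_add_distrib, Finset.sum_sub_distrib, mul_add, mul_sub]
  ring

/-- polarisation -/
theorem aux_polar {m : ℕ} {E : Matrix (Fin m) (Fin m) ℝ} (hE : Eᵀ = E) (a b : Fin m → ℝ) :
    2 * (a ⬝ᵥ (E *ᵥ (a + b))) = a ⬝ᵥ (E *ᵥ a) + (a + b) ⬝ᵥ (E *ᵥ (a + b)) - b ⬝ᵥ (E *ᵥ b) := by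
  have h := aux_symm hE a b
  rw [dotProduct_comm] at h
  have h' := dotProduct_comm (E *ᵥ a) b
  simp only [Matrix.mulVec_add, dotProduct_add, add_dotProduct]
  rw [dotProduct_comm b (E *ᵥ a), ← aux_symm hE a b]
  ring

theorem aux_node (hγ : 0 < γ) (α : Fin N → ℝ) (i : Fin N) (k : Fin M)
    (hτ : 0 < τ i k)
    (hθ : ∀ j ∈ nd.V i k, 0 < θ i j k)
    (hϑ : ∀ j ∈ nd.V i k, 0 < ϑ i j k)
    (hX : (X i k).PosDef)
    (hE : (nd.E i k).PosDef)
    (hF : ∀ j ∈ nd.V i k, (nd.F i j).PosDef)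
    (hLMI15a : (γ ^ 2 • (1 : Matrix (Fin (nd.r i)) (Fin (nd.r i)) ℝ)
        - (τ i k * (α i) ^ 2) • nd.E i k).PosDef)
    (hLMI15b : ∀ j ∈ nd.V i k,
      (γ ^ 2 • (1 : Matrix (Fin (nd.rr i j)) (Fin (nd.rr i j)) ℝ)
        - (θ i j k * (β i j) ^ 2) • nd.F i j).PosDef)
    (hLMI16 : (-(nd.bigMat γ δ β τ θ ϑ X i k)).PosDef)
    (e : Fin N → Fin n → ℝ) (ξ : Fin l → ℝ)
    (ξl : (i : Fin N) → Fin (nd.li i) → ℝ)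
    (w : (i j : Fin N) → Fin (nd.ss i j) → ℝ)
    (ω : Fin N → Fin n → ℝ) (ω1 ω2 : Fin N → Fin N → Fin n → ℝ)
    (h0 : ω i ⬝ᵥ ω i ≤ (α i) ^ 2 *
        ((nd.C i k *ᵥ e i + nd.D i k *ᵥ ξ + nd.Dbar i k *ᵥ ξl i) ⬝ᵥ
         (nd.C i k *ᵥ e i + nd.D i k *ᵥ ξ + nd.Dbar i k *ᵥ ξl i)))
    (h1 : ∀ j ∈ nd.V i k, ω1 i j ⬝ᵥ ω1 i j ≤ (β i j) ^ 2 *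
        ((nd.H i j *ᵥ e i + nd.G i j *ᵥ w i j) ⬝ᵥ
         (nd.H i j *ᵥ e i + nd.G i j *ᵥ w i j)))
    (h2 : ∀ j ∈ nd.V i k, ω2 i j ⬝ᵥ ω2 i j ≤ (β i j) ^ 2 *
        ((nd.H i j *ᵥ e j) ⬝ᵥ (nd.H i j *ᵥ e j))) :
    (∑ l', nd.Lam k l' * (e i ⬝ᵥ (X i l' *ᵥ e i)))
      + 2 * (e i ⬝ᵥ (X i k *ᵥ nd.drift γ X k e ξ ξl w ω ω1 ω2 i))
      + 2 * δ i * (e i ⬝ᵥ (X i k *ᵥ e i))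
      + ((nd.pdeg i k : ℝ) + (nd.qdeg i k : ℝ)) * (e i ⬝ᵥ e i)
      + ∑ j ∈ Finset.univ.filter (fun j => i ∈ nd.V j k),
          (ϑ j i k * (β j i) ^ 2) * ((nd.H j i *ᵥ e i) ⬝ᵥ (nd.H j i *ᵥ e i))
      - ∑ j ∈ nd.V i k, ((ϑ i j k * (β i j) ^ 2) * ((nd.H i j *ᵥ e j) ⬝ᵥ (nd.H i j *ᵥ e j))
          + 2 * (e i ⬝ᵥ e j)
          + 2 * δ j / ((nd.qdeg j k : ℝ) + 1) * (e j ⬝ᵥ (X j k *ᵥ e j)))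
    ≤ γ ^ 2 * (ξ ⬝ᵥ ξ + ξl i ⬝ᵥ ξl i + ∑ j ∈ nd.V i k, w i j ⬝ᵥ w i j) := by
  have hg : 0 < γ ^ 2 := by positivity
  rw [nd.aux_drift γ X i k hX]
  obtain ⟨y, y', hy1, hy2⟩ := aux_B (nd.D i k) (nd.Dbar i k) (nd.E i k) rfl hE ξ (ξl i)
    (nd.B2ᵀ *ᵥ (X i k *ᵥ e i))
  have big := nd.aux_big γ δ β τ θ ϑ X i k (aux_pd_tr hX) (e i) y y' (-ω i)
    (fun j => -ω1 i j) (fun j => -ω2 i j) e hLMI16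
  rw [nd.aux_Q γ δ β ϑ X i k (aux_pd_tr hX)] at big
  have hN : nd.Nblk X i k *ᵥ e i = nd.B2ᵀ *ᵥ (X i k *ᵥ e i)
      - (nd.D i k)ᵀ *ᵥ ((nd.E i k)⁻¹ *ᵥ (nd.D i k *ᵥ (nd.B2ᵀ *ᵥ (X i k *ᵥ e i)))) := by
    simp only [Nblk, ← Matrix.mulVec_mulVec, Matrix.sub_mulVec, Matrix.one_mulVec]
  have hS : nd.Sblk X i k *ᵥ e i = 
      - ((nd.Dbar i k)ᵀ *ᵥ ((nd.E i k)⁻¹ *ᵥ (nd.D i k *ᵥ (nd.B2ᵀ *ᵥ (X i k *ᵥ e i))))) := by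
    simp only [Sblk, ← Matrix.mulVec_mulVec, Matrix.neg_mulVec]
  rw [hN, hS] at big
  simp only [dotProduct_neg, neg_dotProduct, neg_neg] at big
  have hA := aux_A hE (γ ^ 2) (τ i k * α i ^ 2) hg (by positivity) hLMI15a
    (nd.C i k *ᵥ e i + nd.D i k *ᵥ ξ + nd.Dbar i k *ᵥ ξl i)
  have h0' := mul_le_mul_of_nonneg_left h0 hτ.le
  have hpol := aux_polar (aux_inv_tr hE) (nd.C i k *ᵥ e i) (nd.D i k *ᵥ ξ + nd.Dbar i k *ᵥ ξl i)
  rw [← add_assoc] at hpol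
  have hpol' := congrArg (γ ^ 2 * ·) hpol
  have hy1' := congrArg (γ ^ 2 * ·) hy1
  simp only [mul_add, mul_sub] at hpol' hy1'
  have hedge : ∑ j ∈ nd.V i k, (2 *
        (γ ^ 2 * ((nd.H i j *ᵥ e i) ⬝ᵥ ((nd.F i j)⁻¹ *ᵥ (nd.H i j *ᵥ e j)))
        - γ ^ 2 * ((nd.H i j *ᵥ e i) ⬝ᵥ ((nd.F i j)⁻¹ *ᵥ (nd.H i j *ᵥ e i + nd.G i j *ᵥ w i j)))
        - (X i k *ᵥ e i) ⬝ᵥ ω1 i j - (X i k *ᵥ e i) ⬝ᵥ ω2 i j)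
        - ((ϑ i j k * (β i j) ^ 2) * ((nd.H i j *ᵥ e j) ⬝ᵥ (nd.H i j *ᵥ e j))
          + 2 * (e i ⬝ᵥ e j)
          + 2 * δ j / ((nd.qdeg j k : ℝ) + 1) * (e j ⬝ᵥ (X j k *ᵥ e j))))
      ≤ ∑ j ∈ nd.V i k, ((2 * -((X i k *ᵥ e i) ⬝ᵥ ω1 i j) - θ i j k * (ω1 i j ⬝ᵥ ω1 i j)
        + (2 * -((X i k *ᵥ e i) ⬝ᵥ ω2 i j) - ϑ i j k * (ω2 i j ⬝ᵥ ω2 i j))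
        + (2 * (γ ^ 2 * ((nd.H i j *ᵥ e i) ⬝ᵥ ((nd.F i j)⁻¹ *ᵥ (nd.H i j *ᵥ e j))) - e i ⬝ᵥ e j)
        - 2 * δ j / ((nd.qdeg j k : ℝ) + 1) * (e j ⬝ᵥ (X j k *ᵥ e j))))
        - γ ^ 2 * ((nd.H i j *ᵥ e i) ⬝ᵥ ((nd.F i j)⁻¹ *ᵥ (nd.H i j *ᵥ e i)))
        + γ ^ 2 * (w i j ⬝ᵥ w i j)) := by
    refine Finset.sum_le_sum fun j hj => ?_
    have a1 := mul_le_mul_of_nonneg_left (h1 j hj) (hθ j hj).le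
    have a2 := mul_le_mul_of_nonneg_left (h2 j hj) (hϑ j hj).le
    have a3 := aux_A (hF j hj) (γ ^ 2) (θ i j k * β i j ^ 2) hg
      (mul_nonneg (hθ j hj).le (sq_nonneg _)) (hLMI15b j hj)
      (nd.H i j *ᵥ e i + nd.G i j *ᵥ w i j)
    have a4 := congrArg (γ ^ 2 * ·)
      (aux_polar (aux_inv_tr (hF j hj)) (nd.H i j *ᵥ e i) (nd.G i j *ᵥ w i j))
    have a5 : (nd.G i j *ᵥ w i j) ⬝ᵥ ((nd.F i j)⁻¹ *ᵥ (nd.G i j *ᵥ w i j)) ≤ w i j ⬝ᵥ w i j :=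
      aux_C (nd.G i j) (hF j hj) (w i j)
    have a5 := mul_le_mul_of_nonneg_left a5 hg.le
    simp only [mul_add, mul_sub] at a4
    linarith
  simp only [Finset.sum_add_distrib, Finset.sum_sub_distrib, ← Finset.mul_sum] at hedge big ⊢
  simp only [mul_add, mul_sub] at hedge big ⊢
  linarith

end NetData

theorem NetData.aux_swap {n N M l : ℕ} (nd : NetData n N M l) (k : Fin M)
    (f : Fin N → Fin N → ℝ) :
    ∑ i, ∑ j ∈ nd.V i k, f i j =
      ∑ i, ∑ j ∈ Finset.univ.filter (fun j => i ∈ nd.V j k), f j i := by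
  apply Finset.sum_comm'
  intro x y
  simp

/-- under the LMIs (15) and (16), the dissipation inequality
for the perturbed auxiliary observer network holds. -/
theorem stmt8 {n N M l : ℕ} [NeZero N] [NeZero M]
    (nd : NetData n N M l)
    (hself : ∀ i k, i ∉ nd.V i k)
    (γ : ℝ) (hγ : 0 < γ)
    (δ : Fin N → ℝ) (hδ : ∀ i, 0 < δ i)
    (α : Fin N → ℝ) (hα : ∀ i, 0 ≤ α i)
    (β : Fin N → Fin N → ℝ) (hβ : ∀ i j, 0 ≤ β i j)
    (τ : Fin N → Fin M → ℝ) (hτ : ∀ i k, 0 < τ i k)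
    (θ ϑ : Fin N → Fin N → Fin M → ℝ)
    (hθ : ∀ i k, ∀ j ∈ nd.V i k, 0 < θ i j k)
    (hϑ : ∀ i k, ∀ j ∈ nd.V i k, 0 < ϑ i j k)
    (X : Fin N → Fin M → Matrix (Fin n) (Fin n) ℝ)
    (hX : ∀ i k, (X i k).PosDef)
    (hE : ∀ i k, (nd.E i k).PosDef)
    (hF : ∀ i k, ∀ j ∈ nd.V i k, (nd.F i j).PosDef)
    (hLamOff : ∀ k l', k ≠ l' → 0 ≤ nd.Lam k l')
    (hLamRow : ∀ k, ∑ l', nd.Lam k l' = 0)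
    -- LMI (15)
    (hLMI15a : ∀ i k,
      (γ ^ 2 • (1 : Matrix (Fin (nd.r i)) (Fin (nd.r i)) ℝ)
        - (τ i k * (α i) ^ 2) • nd.E i k).PosDef)
    (hLMI15b : ∀ i k, ∀ j ∈ nd.V i k,
      (γ ^ 2 • (1 : Matrix (Fin (nd.rr i j)) (Fin (nd.rr i j)) ℝ)
        - (θ i j k * (β i j) ^ 2) • nd.F i j).PosDef)
    -- LMI (16): the big block matrix is negative definite
    (hLMI16 : ∀ i k, (-(nd.bigMat γ δ β τ θ ϑ X i k)).PosDef) :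
    ∀ (k : Fin M) (e : Fin N → Fin n → ℝ) (ξ : Fin l → ℝ)
      (ξl : (i : Fin N) → Fin (nd.li i) → ℝ)
      (w : (i j : Fin N) → Fin (nd.ss i j) → ℝ)
      (ω : Fin N → Fin n → ℝ) (ω1 ω2 : Fin N → Fin N → Fin n → ℝ),
      (∀ i, ω i ⬝ᵥ ω i ≤ (α i) ^ 2 *
        ((nd.C i k *ᵥ e i + nd.D i k *ᵥ ξ + nd.Dbar i k *ᵥ ξl i) ⬝ᵥ
         (nd.C i k *ᵥ e i + nd.D i k *ᵥ ξ + nd.Dbar i k *ᵥ ξl i))) →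
      (∀ i, ∀ j ∈ nd.V i k, ω1 i j ⬝ᵥ ω1 i j ≤ (β i j) ^ 2 *
        ((nd.H i j *ᵥ e i + nd.G i j *ᵥ w i j) ⬝ᵥ
         (nd.H i j *ᵥ e i + nd.G i j *ᵥ w i j))) →
      (∀ i, ∀ j ∈ nd.V i k, ω2 i j ⬝ᵥ ω2 i j ≤ (β i j) ^ 2 *
        ((nd.H i j *ᵥ e j) ⬝ᵥ (nd.H i j *ᵥ e j))) →
      (N : ℝ) * nd.disagree k e
        + ∑ i, ((∑ l', nd.Lam k l' * (e i ⬝ᵥ (X i l' *ᵥ e i)))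
            + 2 * (e i ⬝ᵥ (X i k *ᵥ nd.drift γ X k e ξ ξl w ω ω1 ω2 i)))
      ≤ -(Finset.univ.inf' Finset.univ_nonempty
            (fun ik : Fin N × Fin M =>
              2 * δ ik.1 / ((nd.qdeg ik.1 ik.2 : ℝ) + 1)))
          * ∑ i, e i ⬝ᵥ (X i k *ᵥ e i)
        + γ ^ 2 * ∑ i, (ξ ⬝ᵥ ξ + ξl i ⬝ᵥ ξl i
            + ∑ j ∈ nd.V i k, w i j ⬝ᵥ w i j) := by
  intro k e ξ ξl w ω ω1 ω2 h0 h1 h2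
  have node := fun i => nd.aux_node γ δ β τ θ ϑ X hγ α i k (hτ i k) (hθ i k) (hϑ i k) (hX i k)
    (hE i k) (hF i k) (hLMI15a i k) (hLMI15b i k) (hLMI16 i k) e ξ ξl w ω ω1 ω2 (h0 i) (h1 i) (h2 i)
  have tot := Finset.sum_le_sum (s := Finset.univ) fun i _ => node i
  rw [← Finset.mul_sum] at tot
  refine le_trans ?_ (add_le_add le_rfl tot)
  have hNN : (N : ℝ) ≠ 0 := by exact_mod_cast NeZero.ne N
  have hdis : (N : ℝ) * nd.disagree k e = ∑ i, (((nd.pdeg i k : ℝ) + (nd.qdeg i k : ℝ)) * (e i ⬝ᵥ e i)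
      - ∑ j ∈ nd.V i k, 2 * (e i ⬝ᵥ e j)) := by
    have hq : ∑ i, ∑ j ∈ nd.V i k, e j ⬝ᵥ e j = ∑ i, (nd.qdeg i k : ℝ) * (e i ⬝ᵥ e i) := by
      rw [nd.aux_swap k (fun i j => e j ⬝ᵥ e j)]
      simp [NetData.qdeg]
    have hp : ∑ i, ∑ j ∈ nd.V i k, e i ⬝ᵥ e i = ∑ i, (nd.pdeg i k : ℝ) * (e i ⬝ᵥ e i) := by
      simp [NetData.pdeg]
    rw [NetData.disagree, ← mul_assoc, mul_one_div_cancel hNN, one_mul]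
    simp only [add_mul, Finset.sum_add_distrib, Finset.sum_sub_distrib]
    rw [← hq, ← hp, ← Finset.sum_add_distrib, ← Finset.sum_sub_distrib]
    refine Finset.sum_congr rfl fun i _ => ?_
    rw [← Finset.sum_add_distrib, ← Finset.sum_sub_distrib]
    refine Finset.sum_congr rfl fun j _ => ?_
    simp only [dotProduct_sub, sub_dotProduct]
    rw [dotProduct_comm (e j) (e i)]
    ring
  have hth := nd.aux_swap k
    (fun i j => (ϑ i j k * (β i j) ^ 2) * ((nd.H i j *ᵥ e j) ⬝ᵥ (nd.H i j *ᵥ e j)))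
  have hz := nd.aux_swap k
    (fun i j => 2 * δ j / ((nd.qdeg j k : ℝ) + 1) * (e j ⬝ᵥ (X j k *ᵥ e j)))
  have hz2 : ∀ i, ∑ j ∈ Finset.univ.filter (fun j => i ∈ nd.V j k),
      2 * δ i / ((nd.qdeg i k : ℝ) + 1) * (e i ⬝ᵥ (X i k *ᵥ e i)) =
      2 * δ i * (e i ⬝ᵥ (X i k *ᵥ e i))
        - 2 * δ i / ((nd.qdeg i k : ℝ) + 1) * (e i ⬝ᵥ (X i k *ᵥ e i)) := by
    intro i
    rw [Finset.sum_const, nsmul_eq_mul]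
    change (nd.qdeg i k : ℝ) * _ = _
    have : (nd.qdeg i k : ℝ) + 1 ≠ 0 := by positivity
    field_simp
    ring
  simp only [hz2] at hz
  have heps : (Finset.univ.inf' Finset.univ_nonempty
            (fun ik : Fin N × Fin M => 2 * δ ik.1 / ((nd.qdeg ik.1 ik.2 : ℝ) + 1)))
          * ∑ i, e i ⬝ᵥ (X i k *ᵥ e i) ≤
      ∑ i, 2 * δ i / ((nd.qdeg i k : ℝ) + 1) * (e i ⬝ᵥ (X i k *ᵥ e i)) := by
    rw [Finset.mul_sum]
    refine Finset.sum_le_sum fun i _ => mul_le_mul_of_nonneg_right ?_ (aux_nonneg (hX i k) _)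
    exact Finset.inf'_le (fun ik : Fin N × Fin M => 2 * δ ik.1 / ((nd.qdeg ik.1 ik.2 : ℝ) + 1))
      (Finset.mem_univ (i, k))
  rw [hdis]
  simp only [Finset.sum_add_distrib, Finset.sum_sub_distrib, neg_mul] at hth hz ⊢
  linarith
end
end
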